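/- Let L be a regular language over a finite alphabet Σ and let L^c = Σ* \ L be its complement. Then tc(L^c) ≤ |Σ|·(tc(L) + 2). Moreover, this bound is tight: for every n ≥ 1 the language L = {b^n} (for a fixed b ∈ Σ) satisfies tc(L) = n and tc(L^c) = |Σ|·(n + 2). -/

import Mathlib

/-- An incomplete DFA over alphabet `α` with state type `σ`:
the transition function is a partial function, modelled as `Option`-valued. -/
structure IDFA (α : Type) (σ : Type) where
  /-- The (partial) transition function. -/
  step : σ → α → Option σ
  /-- The start state. -/
  start : σ
  /-- The set of accepting states. -/
  accept : Set σ

namespace IDFA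

variable {α σ : Type}

/-- The extended (partial) transition function on words. -/
def evalFrom (A : IDFA α σ) (q : σ) (w : List α) : Option σ :=
  w.foldl (fun oq a => oq.bind fun p => A.step p a) (some q)

/-- Running the automaton from the start state. -/
def eval (A : IDFA α σ) (w : List α) : Option σ :=
  A.evalFrom A.start w

/-- The language recognized by an incomplete DFA: words on which the run is
defined and ends in an accepting state. -/
def accepts (A : IDFA α σ) : Set (List α) :=
  {w | ∃ q ∈ A.accept, A.eval w = some q}

/-- `#tr(A)`: the number of (defined) transitions of `A`. -/
noncomputable def trCount (A : IDFA α σ) : ℕ :=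
  {p : σ × α | (A.step p.1 p.2).isSome}.ncard

/-- `#tr(A, b)`: the number of `b`-transitions of `A`. -/
noncomputable def trCountOn (A : IDFA α σ) (b : α) : ℕ :=
  {q : σ | (A.step q b).isSome}.ncard

/-- An incomplete DFA is connected if every state is reachable from the start state. -/
def Connected (A : IDFA α σ) : Prop :=
  ∀ q : σ, ∃ w : List α, A.evalFrom A.start w = some q

end IDFA

/-- A language is regular iff it is recognized by some incomplete DFA with
finitely many states. -/
def IsRegularLang {α : Type} (L : Set (List α)) : Prop :=
  ∃ (σ : Type) (_ : Finite σ) (A : IDFA α σ), A.accepts = L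

/-- `tc(L)`: the transition complexity of `L`, i.e. the minimal number of
transitions of any incomplete DFA recognizing `L`. -/
noncomputable def tc {α : Type} (L : Set (List α)) : ℕ :=
  sInf {n | ∃ (σ : Type) (_ : Finite σ) (A : IDFA α σ), A.accepts = L ∧ A.trCount = n}

/-- `tc_b(L)`: the `b`-transition complexity of `L`, i.e. the minimal number of
`b`-transitions of any incomplete DFA recognizing `L`. -/
noncomputable def tcOn {α : Type} (L : Set (List α)) (b : α) : ℕ :=
  sInf {n | ∃ (σ : Type) (_ : Finite σ) (A : IDFA α σ), A.accepts = L ∧ A.trCountOn b = n}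

/-- `sc(L)`: the (incomplete-DFA) state complexity of `L`, i.e. the number of
states of a minimal incomplete DFA recognizing `L`. -/
noncomputable def sc {α : Type} (L : Set (List α)) : ℕ :=
  sInf {n | ∃ (σ : Type) (_ : Finite σ) (A : IDFA α σ), A.accepts = L ∧ Nat.card σ = n}

/-!
Adding a sink to an incomplete DFA `A` and discarding the unreachable states leaves at most
`#tr(A) + 2` states: the sink, the start state and the targets of transitions. Exchanging accepting
and rejecting states gives the upper bound.

Conversely, words with different left quotients with respect to `L` lead to different states of any
automaton for `L`, so `tc L` is at least the number of pairs `(u⁻¹L, a)` such that `u ++ [a]` is a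
prefix of a word of `L`. The languages `{w}` and `{w}ᶜ` have different left quotients by the
`|w| + 1` prefixes of `w` and by `w ++ [a]`. For `{w}` only the `|w|` proper prefixes can be
extended, each by a single letter, while for `{w}ᶜ` every pair `(u, a)` counts.
-/

namespace IDFA

variable {α σ : Type} (A : IDFA α σ)

theorem evalFrom_append_singleton (q : σ) (w : List α) (a : α) :
    A.evalFrom q (w ++ [a]) = (A.evalFrom q w).bind fun p => A.step p a := by
  simp only [evalFrom, List.foldl_append, List.foldl_cons, List.foldl_nil]

theorem eval_append_singleton (w : List α) (a : α) :
    A.eval (w ++ [a]) = (A.eval w).bind fun p => A.step p a :=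
  A.evalFrom_append_singleton A.start w a

theorem evalFrom_append (q : σ) (u w : List α) :
    A.evalFrom q (u ++ w) = (A.evalFrom q u).bind fun p => A.evalFrom p w := by
  induction w using List.reverseRecOn with
  | nil =>
    rw [List.append_nil]
    exact (Option.bind_fun_some _).symm
  | append_singleton w a ih =>
    simp only [← List.append_assoc, evalFrom_append_singleton, ih, Option.bind_assoc]

theorem evalFrom_cons (q : σ) (a : α) (w : List α) :
    A.evalFrom q (a :: w) = (A.step q a).bind fun p => A.evalFrom p w :=
  A.evalFrom_append q [a] w

theorem append_mem_accepts_iff (u w : List α) :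
    u ++ w ∈ A.accepts ↔ ∃ p ∈ A.accept, ∃ q, A.eval u = some q ∧ A.evalFrom q w = some p := by
  simp only [accepts, eval, Set.mem_ofPred_eq, evalFrom_append, Option.bind_eq_some_iff]

theorem preimage_append_accepts_congr {u v : List α} (h : A.eval u = A.eval v) :
    (u ++ ·) ⁻¹' A.accepts = (v ++ ·) ⁻¹' A.accepts := by
  ext w
  simp only [Set.mem_preimage, append_mem_accepts_iff, h]

theorem exists_eval_eq_some_of_append_cons_mem_accepts {u w : List α} {a : α}
    (h : u ++ a :: w ∈ A.accepts) : ∃ q, A.eval u = some q ∧ (A.step q a).isSome := by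
  obtain ⟨p, -, q, hu, hw⟩ := (A.append_mem_accepts_iff u (a :: w)).1 h
  rw [evalFrom_cons, Option.bind_eq_some_iff] at hw
  obtain ⟨r, hstep, -⟩ := hw
  exact ⟨q, hu, Option.isSome_of_eq_some hstep⟩

theorem card_le_trCount_of_injective [Finite α] [Finite σ] {ι : Type*} {u : ι → List α} {a : ι → α}
    (hlive : ∀ i, ∃ w, u i ++ a i :: w ∈ A.accepts)
    (hinj : Function.Injective fun i => ((u i ++ ·) ⁻¹' A.accepts, a i)) :
    Nat.card ι ≤ A.trCount := by
  choose w hw using hlive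
  choose q heval hstep using fun i => A.exists_eval_eq_some_of_append_cons_mem_accepts (hw i)
  let transition (i : ι) : {p : σ × α | (A.step p.1 p.2).isSome} := ⟨(q i, a i), hstep i⟩
  have transition_injective : Function.Injective transition := by
    intro i j hij
    obtain ⟨hq, ha⟩ := Prod.ext_iff.1 (congrArg Subtype.val hij)
    have heval_eq : A.eval (u i) = A.eval (u j) := by
      rw [heval, heval]
      exact congrArg some hq
    exact hinj (Prod.ext (A.preimage_append_accepts_congr heval_eq) ha)
  exact Nat.card_le_card_of_injective transition transition_injective

theorem bind_step_mem_range_eval {o : Option σ} (ho : o ∈ Set.range A.eval) (a : α) :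
    (o.bind fun p => A.step p a) ∈ Set.range A.eval := by
  obtain ⟨w, rfl⟩ := ho
  exact ⟨w ++ [a], A.eval_append_singleton w a⟩

/-- The complement automaton: `A` is completed with the sink `none`, restricted to the states that
are reachable from the start state, and its accepting and rejecting states are exchanged. -/
def compl : IDFA α (Set.range A.eval) where
  step o a := some ⟨o.1.bind fun p => A.step p a, A.bind_step_mem_range_eval o.2 a⟩
  start := ⟨some A.start, [], rfl⟩
  accept := {o | ¬ ∃ q ∈ A.accept, o.1 = some q}

theorem eval_compl (w : List α) : A.compl.eval w = some ⟨A.eval w, w, rfl⟩ := by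
  induction w using List.reverseRecOn with
  | nil => rfl
  | append_singleton w a ih =>
    simp only [eval_append_singleton, ih, Option.bind_some]
    rfl

theorem accepts_compl : A.compl.accepts = A.acceptsᶜ := by
  ext w
  simp only [accepts, eval_compl, Set.mem_compl_iff, Set.mem_ofPred_eq, Option.some_inj,
    exists_eq_right']
  rfl

theorem range_eval_subset :
    Set.range A.eval ⊆ insert none (insert (some A.start)
      ((fun p : σ × α => A.step p.1 p.2) '' {p | (A.step p.1 p.2).isSome})) := by
  rintro _ ⟨w, rfl⟩
  rcases List.eq_nil_or_concat' w with rfl | ⟨u, a, rfl⟩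
  · exact .inr (.inl rfl)
  · rcases h : A.eval (u ++ [a]) with _ | r
    · exact .inl rfl
    · rw [eval_append_singleton, Option.bind_eq_some_iff] at h
      obtain ⟨q, -, hstep⟩ := h
      exact .inr (.inr ⟨(q, a), Option.isSome_of_eq_some hstep, hstep⟩)

theorem ncard_range_eval_le [Finite α] [Finite σ] :
    (Set.range A.eval).ncard ≤ A.trCount + 2 := by
  let targets : Set (Option σ) :=
    (fun p : σ × α => A.step p.1 p.2) '' {p | (A.step p.1 p.2).isSome}
  calc (Set.range A.eval).ncard
      ≤ (insert none (insert (some A.start) targets)).ncard :=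
        Set.ncard_le_ncard A.range_eval_subset
    _ ≤ (insert (some A.start) targets).ncard + 1 := Set.ncard_insert_le _ _
    _ ≤ targets.ncard + 1 + 1 := Nat.succ_le_succ (Set.ncard_insert_le _ _)
    _ ≤ A.trCount + 2 := Nat.add_le_add_right Set.ncard_image_le 2

theorem trCount_compl_le [Finite α] [Finite σ] :
    A.compl.trCount ≤ Nat.card α * (A.trCount + 2) :=
  calc A.compl.trCount
      ≤ Nat.card (Set.range A.eval × α) := Set.ncard_le_card _
    _ = Nat.card α * (Set.range A.eval).ncard := by
        rw [Nat.card_prod, Nat.card_coe_set_eq, mul_comm]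
    _ ≤ Nat.card α * (A.trCount + 2) := Nat.mul_le_mul_left _ A.ncard_range_eval_le

open Classical in
/-- The path automaton of a word `w`, which recognizes `{w}`. Its states are the prefixes of `w`,
and reading a word leads to that word itself. -/
noncomputable def ofWord (w : List α) : IDFA α {u : List α // u <+: w} where
  step u a := if h : u.1 ++ [a] <+: w then some ⟨u.1 ++ [a], h⟩ else none
  start := ⟨[], List.nil_prefix⟩
  accept := {⟨w, List.prefix_rfl⟩}

instance finite_prefix (w : List α) : Finite {u : List α // u <+: w} :=
  (w.inits.finite_toSet.subset fun u hu => (List.mem_inits u w).2 hu).to_subtype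

theorem ofWord_step_eq_some_iff {w : List α} {u v : {u : List α // u <+: w}} {a : α} :
    (ofWord w).step u a = some v ↔ u.1 ++ [a] = v.1 := by
  rw [ofWord, Option.dite_none_right_eq_some]
  exact ⟨fun ⟨_, h⟩ => congrArg Subtype.val (Option.some.inj h),
    fun h => ⟨h ▸ v.2, congrArg some (Subtype.ext h)⟩⟩

theorem eval_ofWord_eq_some_iff {w u : List α} {v : {u : List α // u <+: w}} :
    (ofWord w).eval u = some v ↔ u = v.1 := by
  induction u using List.reverseRecOn generalizing v with
  | nil => exact Option.some_inj.trans Subtype.ext_iff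
  | append_singleton u a ih =>
    simp only [eval_append_singleton, Option.bind_eq_some_iff, ih, ofWord_step_eq_some_iff]
    constructor
    · rintro ⟨p, rfl, h⟩
      exact h
    · intro h
      exact ⟨⟨u, (List.prefix_append u [a]).trans (h ▸ v.2)⟩, rfl, h⟩

theorem accepts_ofWord (w : List α) : (ofWord w).accepts = {w} := by
  ext u
  simp only [accepts, eval_ofWord_eq_some_iff, Set.mem_ofPred_eq, Set.mem_singleton_iff]
  simp [ofWord]

theorem trCount_ofWord_le (w : List α) : (ofWord w).trCount ≤ w.length := by
  let pathTransition (i : Fin w.length) : {u : List α // u <+: w} × α :=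
    (⟨w.take i, List.take_prefix i w⟩, w[i])
  have isSome_subset_range : {p : {u : List α // u <+: w} × α | ((ofWord w).step p.1 p.2).isSome} ⊆
      Set.range pathTransition := by
    rintro ⟨⟨u, hu⟩, a⟩ hstep
    obtain ⟨v, hv⟩ := Option.isSome_iff_exists.1 hstep
    obtain ⟨s, rfl⟩ : u ++ [a] <+: w := ofWord_step_eq_some_iff.1 hv ▸ v.2
    exact ⟨⟨u.length, by simp⟩, by simp [pathTransition]⟩
  calc (ofWord w).trCount
      ≤ (Set.range pathTransition).ncard := Set.ncard_le_ncard isSome_subset_range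
    _ ≤ Nat.card (Fin w.length) := Finite.card_range_le pathTransition
    _ = w.length := Nat.card_fin _

end IDFA

section TransitionComplexity

variable {α : Type} {L : Set (List α)}

theorem tc_le_trCount {σ : Type} [Finite σ] (A : IDFA α σ) : tc A.accepts ≤ A.trCount :=
  Nat.sInf_le ⟨σ, inferInstance, A, rfl, rfl⟩

theorem IsRegularLang.exists_trCount_eq_tc (hL : IsRegularLang L) :
    ∃ (σ : Type) (_ : Finite σ) (A : IDFA α σ), A.accepts = L ∧ A.trCount = tc L := by
  obtain ⟨σ, hσ, A, hA⟩ := hL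
  exact Nat.sInf_mem
    (s := {n | ∃ (σ : Type) (_ : Finite σ) (A : IDFA α σ), A.accepts = L ∧ A.trCount = n})
    ⟨_, σ, hσ, A, hA, rfl⟩

theorem IsRegularLang.compl (hL : IsRegularLang L) : IsRegularLang Lᶜ := by
  obtain ⟨σ, _, A, rfl⟩ := hL
  exact ⟨_, inferInstance, A.compl, A.accepts_compl⟩

theorem IsRegularLang.tc_compl_le [Finite α] (hL : IsRegularLang L) :
    tc Lᶜ ≤ Nat.card α * (tc L + 2) := by
  obtain ⟨σ, _, A, rfl, htc⟩ := hL.exists_trCount_eq_tc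
  rw [← htc, ← A.accepts_compl]
  exact (tc_le_trCount A.compl).trans A.trCount_compl_le

theorem IsRegularLang.card_le_tc_of_injective [Finite α] (hL : IsRegularLang L) {ι : Type*}
    {u : ι → List α} {a : ι → α} (hlive : ∀ i, ∃ w, u i ++ a i :: w ∈ L)
    (hinj : Function.Injective fun i => ((u i ++ ·) ⁻¹' L, a i)) : Nat.card ι ≤ tc L := by
  obtain ⟨σ, _, A, rfl, htc⟩ := hL.exists_trCount_eq_tc
  exact htc ▸ A.card_le_trCount_of_injective hlive hinj

theorem isRegularLang_singleton (w : List α) : IsRegularLang {w} :=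
  ⟨_, inferInstance, IDFA.ofWord w, IDFA.accepts_ofWord w⟩

theorem eq_of_preimage_append_singleton_eq {u v w : List α} (hu : u <+: w)
    (h : (u ++ ·) ⁻¹' {w} = (v ++ ·) ⁻¹' {w}) : u = v := by
  obtain ⟨s, rfl⟩ := hu
  have hv : s ∈ (v ++ ·) ⁻¹' {u ++ s} := h ▸ rfl
  exact (List.append_cancel_right hv).symm

theorem injOn_preimage_append_singleton (w : List α) (a : α) :
    Set.InjOn (fun u : List α => (u ++ ·) ⁻¹' {w}) {u | u <+: w ++ [a]} := by
  intro u hu v hv h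
  rcases List.prefix_concat_iff.1 hu with rfl | hu
  · rcases List.prefix_concat_iff.1 hv with rfl | hv
    · rfl
    · exact (eq_of_preimage_append_singleton_eq hv h.symm).symm
  · exact eq_of_preimage_append_singleton_eq hu h

theorem length_le_tc_singleton [Finite α] (w : List α) : w.length ≤ tc {w} := by
  rw [← Nat.card_fin w.length]
  refine (isRegularLang_singleton w).card_le_tc_of_injective (u := fun i : Fin w.length => w.take i)
    (a := fun i => w[i]) (fun i => ⟨w.drop (i + 1), by simp⟩) fun i j hij => ?_
  have htake : w.take i = w.take j :=
    eq_of_preimage_append_singleton_eq (List.take_prefix i w) (Prod.ext_iff.1 hij).1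
  rw [List.take_eq_take_iff] at htake
  ext
  omega

theorem card_mul_le_tc_compl_singleton [Finite α] (w : List α) :
    Nat.card α * (w.length + 2) ≤ tc ({w}ᶜ : Set (List α)) := by
  rw [← Nat.card_fin (w.length + 2), ← Nat.card_prod]
  refine (isRegularLang_singleton w).compl.card_le_tc_of_injective
    (u := fun p : α × Fin (w.length + 2) => (w ++ [p.1]).take p.2) (a := Prod.fst)
    (fun p => ⟨w, fun h => ?_⟩) ?_
  · have hlength := congrArg List.length h
    simp only [List.length_append, List.length_cons] at hlength
    omega
  · rintro ⟨a, i⟩ ⟨c, j⟩ hij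
    obtain ⟨hquot, rfl : a = c⟩ := Prod.ext_iff.1 hij
    have htake : (w ++ [a]).take i.1 = (w ++ [a]).take j.1 :=
      injOn_preimage_append_singleton w a (List.take_prefix _ _) (List.take_prefix _ _)
        (compl_injective hquot)
    rw [List.take_eq_take_iff, List.length_append, List.length_singleton] at htake
    have hindex : i = j := by
      ext
      omega
    rw [hindex]

theorem tc_singleton [Finite α] (w : List α) : tc {w} = w.length := by
  refine le_antisymm ?_ (length_le_tc_singleton w)
  rw [← IDFA.accepts_ofWord w]
  exact (tc_le_trCount _).trans (IDFA.trCount_ofWord_le w)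

theorem tc_compl_singleton [Finite α] (w : List α) :
    tc ({w}ᶜ : Set (List α)) = Nat.card α * (w.length + 2) :=
  le_antisymm (tc_singleton w ▸ (isRegularLang_singleton w).tc_compl_le)
    (card_mul_le_tc_compl_singleton w)

end TransitionComplexity

theorem tc_compl_le_and_tight_general {α : Type} [Finite α] :
    (∀ L : Set (List α), IsRegularLang L → tc Lᶜ ≤ Nat.card α * (tc L + 2)) ∧
    (∀ w : List α, tc {w} = w.length ∧
      tc ({w}ᶜ : Set (List α)) = Nat.card α * (w.length + 2)) :=
  ⟨fun _ hL => hL.tc_compl_le, fun w => ⟨tc_singleton w, tc_compl_singleton w⟩⟩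

/-- `tc(Lᶜ) ≤ |Σ|·(tc(L) + 2)` for every regular language `L`,
and the bound is tight: for every `n ≥ 1` the language `L = {bⁿ}` satisfies
`tc(L) = n` and `tc(Lᶜ) = |Σ|·(n + 2)`. -/
theorem tc_compl_le_and_tight {α : Type} [Finite α] (b : α) :
    (∀ L : Set (List α), IsRegularLang L →
      tc Lᶜ ≤ Nat.card α * (tc L + 2)) ∧
    (∀ n : ℕ, 1 ≤ n →
      tc ({List.replicate n b} : Set (List α)) = n ∧
      tc (({List.replicate n b} : Set (List α))ᶜ) = Nat.card α * (n + 2)) := by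
  refine ⟨tc_compl_le_and_tight_general.1, fun n _ => ?_⟩
  simpa using tc_compl_le_and_tight_general.2 (List.replicate n b)
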